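/- arXiv:2209.10400 — 2 statements merged into one kernel-verified Lean document; each statement's English description precedes it below -/
import Mathlib

section
/- Let T be a finite tree rooted at r, let p ≥ 2·h(T), and let k ≥ 1. There exists an optimal solution of the Min-Time problem with k robots, i.e. a feasible covering 𝓘 together with a partition of 𝓘 into k parts S_1,…,S_k minimizing max_{1≤i≤k} Σ_{I∈S_i} C(I), such that every leaf of T belongs to the vertex set of exactly one immersion of 𝓘. -/
/-!
Among all feasible coverings with an assignment to robots, take one that minimizes the makespan and,
subject to that, the total number of vertices `∑ I ∈ 𝓘, |V(I)|`. Such a minimizer exists because at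
least one feasible covering exists: the root paths to all vertices, which have cost at most `2·h(T)`.

If a leaf `l` were in two distinct immersions `I` and `J` of the minimizer, replace `I` by `I - l`.
This is still an immersion, since a path between vertices other than `l` never visits the degree-one
vertex `l` (`isImmersion_deleteLeaf`); its cost does not grow; and `l` stays covered by `J`. As `𝓘`
is a set, `I - l` may already belong to it, in which case `I` is simply dropped. Either way the
makespan does not increase and the total number of vertices drops (`exists_smaller`), contradicting
the choice of the minimizer.
-/

open SimpleGraph Finset

/-- Cost of a subgraph-immersion: twice the number of its edges. -/
noncomputable def immCost {V : Type*} {G : SimpleGraph V} (I : G.Subgraph) : ℕ :=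
  2 * I.edgeSet.ncard

/-- An immersion is a connected subgraph of `G` containing the root `r`. -/
def IsImmersion {V : Type*} {G : SimpleGraph V} (r : V) (I : G.Subgraph) : Prop :=
  I.Connected ∧ r ∈ I.verts

/-- Height of the rooted tree: maximum distance from the root. -/
noncomputable def treeHeight {V : Type*} [Fintype V] (G : SimpleGraph V) (r : V) : ℕ :=
  Finset.univ.sup (fun v => G.dist r v)

/-- A leaf of the rooted tree: a vertex `v ≠ r` of degree 1. -/
def IsTreeLeaf {V : Type*} (G : SimpleGraph V) (r v : V) : Prop :=
  v ≠ r ∧ (G.neighborSet v).ncard = 1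

/-- A leaf of an immersion `I`: a vertex `v ≠ r` of degree 1 in `I`. -/
def IsImmLeaf {V : Type*} {G : SimpleGraph V} (r : V) (I : G.Subgraph) (v : V) : Prop :=
  v ≠ r ∧ (I.neighborSet v).ncard = 1

/-- A feasible covering: a finite set of immersions, each of cost at most `p`,
whose vertex sets cover all vertices. -/
def IsFeasible {V : Type*} [Fintype V] {G : SimpleGraph V} (r : V) (p : ℕ)
    (𝓘 : Finset G.Subgraph) : Prop :=
  (∀ I ∈ 𝓘, IsImmersion r I ∧ immCost I ≤ p) ∧ (∀ v : V, ∃ I ∈ 𝓘, v ∈ I.verts)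

/-- Total cost of a set of immersions. -/
noncomputable def totalCost {V : Type*} {G : SimpleGraph V} (𝓘 : Finset G.Subgraph) : ℕ :=
  ∑ I ∈ 𝓘, immCost I

/-- Optimality for the Min-Distance problem. -/
def MinDistOptimal {V : Type*} [Fintype V] {G : SimpleGraph V} (r : V) (p : ℕ)
    (𝓘 : Finset G.Subgraph) : Prop :=
  IsFeasible r p 𝓘 ∧ ∀ 𝓙 : Finset G.Subgraph, IsFeasible r p 𝓙 → totalCost 𝓘 ≤ totalCost 𝓙

/-- Makespan (maximum collective time) of an assignment `a` of immersions to `k` robots. -/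
noncomputable def makespan {V : Type*} {G : SimpleGraph V} (k : ℕ)
    (𝓘 : Finset G.Subgraph) (a : G.Subgraph → Fin k) : ℕ :=
  Finset.univ.sup (fun i : Fin k => ∑ I ∈ 𝓘.filter (fun I => a I = i), immCost I)

/-- Optimality for the Min-Time problem with `k` robots. -/
def MinTimeOptimal {V : Type*} [Fintype V] {G : SimpleGraph V} (r : V) (p k : ℕ)
    (𝓘 : Finset G.Subgraph) (a : G.Subgraph → Fin k) : Prop :=
  IsFeasible r p 𝓘 ∧ ∀ (𝓙 : Finset G.Subgraph) (b : G.Subgraph → Fin k),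
    IsFeasible r p 𝓙 → makespan k 𝓘 a ≤ makespan k 𝓙 b

/-- Optimality for the Min-Immersions problem. -/
def MinImmOptimal {V : Type*} [Fintype V] {G : SimpleGraph V} (r : V) (p : ℕ)
    (𝓘 : Finset G.Subgraph) : Prop :=
  IsFeasible r p 𝓘 ∧ ∀ 𝓙 : Finset G.Subgraph, IsFeasible r p 𝓙 → 𝓘.card ≤ 𝓙.card

/-- The total number of vertices of the immersions in a covering, counted with multiplicity; the
secondary objective that is minimized among optimal solutions. -/
noncomputable def totalVerts {V : Type*} {G : SimpleGraph V} (𝓘 : Finset G.Subgraph) : ℕ :=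
  ∑ I ∈ 𝓘, I.verts.ncard

theorem immCost_mono {V : Type*} [Finite V] {G : SimpleGraph V} {I J : G.Subgraph} (h : I ≤ J) :
    immCost I ≤ immCost J :=
  Nat.mul_le_mul_left 2 (Set.ncard_le_ncard (Subgraph.edgeSet_mono h) (Set.toFinite _))

/-- A vertex of degree one is not an interior vertex of any path. -/
theorem notMem_support_of_leaf {V : Type*} [Finite V] {G : SimpleGraph V} {u v l : V}
    (hl : (G.neighborSet l).ncard = 1) {w : G.Walk u v} (hw : w.IsPath) (hu : u ≠ l) (hv : v ≠ l) :
    l ∉ w.support := by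
  intro hmem
  obtain ⟨i, rfl, hi⟩ := Walk.mem_support_iff_exists_getVert.mp hmem
  have h0 : i ≠ 0 := by
    rintro rfl
    exact hu (w.getVert_zero).symm
  have h1 : i < w.length := by
    refine lt_of_le_of_ne hi ?_
    rintro rfl
    exact hv (w.getVert_length).symm
  have h2 := hw.ncard_neighborSet_toSubgraph_internal_eq_two h0 h1
  have h3 := Set.ncard_le_ncard (w.toSubgraph.neighborSet_subset (w.getVert i)) (Set.toFinite _)
  omega

/-- Removing a leaf of the tree from an immersion leaves an immersion. -/
theorem isImmersion_deleteLeaf {V : Type*} [Finite V] {G : SimpleGraph V} {r l : V}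
    (hl : IsTreeLeaf G r l) {I : G.Subgraph} (hI : IsImmersion r I) :
    IsImmersion r (I.deleteVerts {l}) := by
  classical
  have hr : r ∈ (I.deleteVerts {l}).verts := ⟨hI.2, fun h => hl.1 h.symm⟩
  refine ⟨(Subgraph.connected_iff_forall_exists_walk_subgraph _).mpr ⟨⟨r, hr⟩, ?_⟩, hr⟩
  intro u v hu hv
  obtain ⟨w, hw⟩ :=
    ((Subgraph.connected_iff_forall_exists_walk_subgraph _).mp hI.1).2 hu.1 hv.1
  have hle : w.bypass.toSubgraph ≤ I := Walk.toSubgraph_bypass_le_toSubgraph.trans hw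
  have hns : l ∉ w.bypass.support :=
    notMem_support_of_leaf hl.2 w.bypass_isPath hu.2 hv.2
  have hne : ∀ x ∈ w.bypass.toSubgraph.verts, x ∉ ({l} : Set V) := by
    rintro x hx rfl
    exact hns (w.bypass.mem_verts_toSubgraph.mp hx)
  refine ⟨w.bypass, fun x hx => ⟨hle.1 hx, hne x hx⟩, fun x y hxy => ?_⟩
  exact Subgraph.deleteVerts_adj.mpr
    ⟨hle.1 hxy.fst_mem, hne x hxy.fst_mem, hle.1 hxy.snd_mem, hne y hxy.snd_mem, hle.2 hxy⟩

/-- The root paths to all vertices form a feasible covering. -/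
theorem exists_isFeasible {V : Type*} [Fintype V] {T : SimpleGraph V} {r : V} {p : ℕ}
    (hT : T.IsTree) (hp : 2 * treeHeight T r ≤ p) :
    ∃ 𝓘 : Finset T.Subgraph, IsFeasible r p 𝓘 := by
  classical
  choose w hw using fun v => hT.1.exists_walk_length_eq_dist r v
  refine ⟨Finset.univ.image fun v => (w v).toSubgraph, ?_, fun v => ?_⟩
  · intro I hI
    obtain ⟨v, -, rfl⟩ := Finset.mem_image.mp hI
    refine ⟨⟨(w v).toSubgraph_connected, (w v).start_mem_verts_toSubgraph⟩, ?_⟩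
    refine le_trans (Nat.mul_le_mul_left 2 ?_) hp
    have h1 : (w v).toSubgraph.edgeSet = ((w v).edges.toFinset : Set (Sym2 V)) := by
      ext e
      simp
    have h2 := (w v).edges.toFinset_card_le
    have h3 : T.dist r v ≤ treeHeight T r :=
      Finset.le_sup (f := fun v => T.dist r v) (Finset.mem_univ v)
    rw [h1, Set.ncard_coe_finset]
    rw [Walk.length_edges, hw] at h2
    omega
  · exact ⟨_, Finset.mem_image_of_mem _ (Finset.mem_univ v), (w v).end_mem_verts_toSubgraph⟩

theorem makespan_le_of_load_le {V : Type*} {G : SimpleGraph V} {k : ℕ} {𝓘 𝓙 : Finset G.Subgraph}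
    {a b : G.Subgraph → Fin k}
    (h : ∀ i, ∑ I ∈ 𝓘 with a I = i, immCost I ≤ ∑ I ∈ 𝓙 with b I = i, immCost I) :
    makespan k 𝓘 a ≤ makespan k 𝓙 b :=
  Finset.sup_mono_fun fun i _ => h i

/-- If two immersions of a feasible covering share a leaf, removing the leaf from one of them gives
a feasible covering of no larger makespan and with strictly fewer vertices in total. -/
theorem exists_smaller {V : Type*} [Fintype V] {T : SimpleGraph V} {r l : V} {p k : ℕ}
    {𝓘 : Finset T.Subgraph} (a : T.Subgraph → Fin k) (h𝓘 : IsFeasible r p 𝓘)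
    (hl : IsTreeLeaf T r l) {I J : T.Subgraph} (hI : I ∈ 𝓘) (hJ : J ∈ 𝓘) (hIJ : J ≠ I)
    (hlI : l ∈ I.verts) (hlJ : l ∈ J.verts) :
    ∃ (𝓙 : Finset T.Subgraph) (b : T.Subgraph → Fin k), IsFeasible r p 𝓙 ∧
      makespan k 𝓙 b ≤ makespan k 𝓘 a ∧ totalVerts 𝓙 < totalVerts 𝓘 := by
  classical
  set D := I.deleteVerts {l} with hD
  have hle : D ≤ I := Subgraph.deleteVerts_le
  have himm : IsImmersion r D ∧ immCost D ≤ p :=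
    ⟨isImmersion_deleteLeaf hl (h𝓘.1 I hI).1, (immCost_mono hle).trans (h𝓘.1 I hI).2⟩
  have hlt : D.verts.ncard < I.verts.ncard := by
    refine Set.ncard_lt_ncard ⟨hle.1, fun h => ?_⟩ (Set.toFinite _)
    exact (h hlI).2 rfl
  obtain ⟨R, hIR, rfl⟩ : ∃ R, I ∉ R ∧ 𝓘 = insert I R :=
    ⟨𝓘.erase I, Finset.notMem_erase _ _, (Finset.insert_erase hI).symm⟩
  have hJR : J ∈ R := (Finset.mem_insert.mp hJ).resolve_left hIJ
  have hfeas : IsFeasible r p (insert D R) := by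
    refine ⟨fun K hK => ?_, fun v => ?_⟩
    · rcases Finset.mem_insert.mp hK with rfl | hK
      · exact himm
      · exact h𝓘.1 K (Finset.mem_insert_of_mem hK)
    · by_cases hvl : v = l
      · exact ⟨J, Finset.mem_insert_of_mem hJR, hvl ▸ hlJ⟩
      obtain ⟨K, hK, hvK⟩ := h𝓘.2 v
      rcases Finset.mem_insert.mp hK with rfl | hK
      · exact ⟨D, Finset.mem_insert_self _ _, hvK, hvl⟩
      · exact ⟨K, Finset.mem_insert_of_mem hK, hvK⟩
  by_cases hmem : D ∈ R
  · -- `I - l` is already in the covering, so `I` can be dropped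
    rw [Finset.insert_eq_of_mem hmem] at hfeas
    refine ⟨R, a, hfeas, makespan_le_of_load_le fun i => ?_, ?_⟩
    · exact Finset.sum_le_sum_of_subset
        (Finset.filter_subset_filter _ (Finset.subset_insert _ _))
    · unfold totalVerts
      rw [Finset.sum_insert hIR]
      omega
  · -- `I - l` is new and is given to the robot that was in charge of `I`
    refine ⟨insert D R, Function.update a D (a I), hfeas,
      makespan_le_of_load_le fun i => ?_, ?_⟩
    · rw [Finset.sum_filter, Finset.sum_filter, Finset.sum_insert hmem, Finset.sum_insert hIR]
      refine add_le_add ?_ (le_of_eq (Finset.sum_congr rfl fun K hK => ?_))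
      · rw [Function.update_self]
        split_ifs
        · exact immCost_mono hle
        · exact le_rfl
      · rw [Function.update_of_ne (ne_of_mem_of_not_mem hK hmem)]
    · unfold totalVerts
      rw [Finset.sum_insert hIR, Finset.sum_insert hmem]
      omega

theorem stmt_4 {V : Type*} [Fintype V] (T : SimpleGraph V) (r : V) (p k : ℕ)
    (hT : T.IsTree) (hp : 2 * treeHeight T r ≤ p) (hk : 1 ≤ k) :
    ∃ (𝓘 : Finset T.Subgraph) (a : T.Subgraph → Fin k),
      MinTimeOptimal r p k 𝓘 a ∧
      ∀ l : V, IsTreeLeaf T r l → ∃! I : T.Subgraph, I ∈ 𝓘 ∧ l ∈ I.verts := by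
  obtain ⟨𝓘₀, h₀⟩ := exists_isFeasible hT hp
  -- a lexicographic minimizer of makespan and total number of vertices
  obtain ⟨⟨𝓘, a⟩, hfeas, hmin⟩ := exists_minimalFor_of_wellFoundedLT
    (fun x : Finset T.Subgraph × (T.Subgraph → Fin k) => IsFeasible r p x.1)
    (fun x => toLex (makespan k x.1 x.2, totalVerts x.1))
    ⟨(𝓘₀, fun _ => ⟨0, hk⟩), h₀⟩
  change IsFeasible r p 𝓘 at hfeas
  have hlex : ∀ (𝓙 : Finset T.Subgraph) (b : T.Subgraph → Fin k), IsFeasible r p 𝓙 →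
      makespan k 𝓘 a < makespan k 𝓙 b ∨
        makespan k 𝓘 a = makespan k 𝓙 b ∧ totalVerts 𝓘 ≤ totalVerts 𝓙 := by
    intro 𝓙 b h𝓙
    have h := (le_total (toLex (makespan k 𝓘 a, totalVerts 𝓘))
      (toLex (makespan k 𝓙 b, totalVerts 𝓙))).elim id (hmin (j := (𝓙, b)) h𝓙)
    simpa [Prod.Lex.toLex_le_toLex] using h
  refine ⟨𝓘, a, ⟨hfeas, fun 𝓙 b h𝓙 => ?_⟩, fun l hl => ?_⟩
  · rcases hlex 𝓙 b h𝓙 with h | h <;> omega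
  · obtain ⟨I, hI, hlI⟩ := hfeas.2 l
    refine ⟨I, ⟨hI, hlI⟩, fun J ⟨hJ, hlJ⟩ => ?_⟩
    by_contra hne
    obtain ⟨𝓙, b, h𝓙, hm, hv⟩ := exists_smaller a hfeas hl hI hJ hne hlI hlJ
    rcases hlex 𝓙 b h𝓙 with h | h <;> omega
end

section
/- Let T be a finite tree rooted at r with at least one edge and let p ≥ 2·h(T). There exists an optimal solution 𝓘 of the Min-Distance problem (a feasible covering minimizing the total cost Σ_{I∈𝓘} C(I)) such that the leaf sets of the immersions of 𝓘 form a partition of the set of leaves of T, i.e. every leaf of every immersion I ∈ 𝓘 is a leaf of T and every leaf of T is a leaf of exactly one immersion of 𝓘. -/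
/-!
Every optimal covering already has the required property. The key fact is a trimming argument:
if `v` is a leaf of an immersion `I` of a feasible covering, then deleting `v` from `I` leaves an
immersion of strictly smaller cost, so if `v` also lies in another immersion of the covering, the
trimmed covering is feasible and strictly cheaper (`leaf_unique_of_optimal`). Hence in an optimal
covering a leaf of `I` lies in no immersion other than `I`.

* Two immersions therefore never share a leaf, and a leaf of `T`, which is a leaf of every
  immersion containing it, is a leaf of exactly one immersion.
* If a leaf `v` of `I` were not a leaf of `T`, it would have a neighbour `w` in `T` that is not a
  neighbour of `v` in `I`. By uniqueness of paths in `T`, `w` is not in `I`, and the path from `w`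
  to `r` runs through `v`; so the immersion covering `w` is different from `I` and contains `v`,
  a contradiction.

An optimal covering exists because shortest paths from `r` to all vertices form a feasible
covering, which is where `p ≥ 2 h(T)` is used.
-/

open SimpleGraph Finset

theorem Connected.exists_isPath_toSubgraph_le {V : Type*} {G : SimpleGraph V} {I : G.Subgraph}
    (hI : I.Connected) {a b : V} (ha : a ∈ I.verts) (hb : b ∈ I.verts) :
    ∃ q : G.Walk a b, q.IsPath ∧ q.toSubgraph ≤ I := by
  classical
  obtain ⟨q, hq⟩ := ((Subgraph.connected_iff_forall_exists_walk_subgraph I).1 hI).2 ha hb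
  exact ⟨q.bypass, q.bypass_isPath, Walk.toSubgraph_bypass_le_toSubgraph.trans hq⟩

/-- In a tree, a connected subgraph contains every path between two of its vertices. -/
theorem toSubgraph_le_of_isPath {V : Type*} {T : SimpleGraph V} (hT : T.IsTree)
    {I : T.Subgraph} (hI : I.Connected) {a b : V} (ha : a ∈ I.verts) (hb : b ∈ I.verts)
    {q : T.Walk a b} (hq : q.IsPath) : q.toSubgraph ≤ I := by
  obtain ⟨q', hq', hle⟩ := Connected.exists_isPath_toSubgraph_le hI ha hb
  rwa [(hT.existsUnique_path a b).unique hq hq']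

/-- Connected subgraphs of a tree are induced. -/
theorem adj_of_mem_verts {V : Type*} {T : SimpleGraph V} (hT : T.IsTree)
    {I : T.Subgraph} (hI : I.Connected) {a b : V} (ha : a ∈ I.verts) (hb : b ∈ I.verts)
    (hab : T.Adj a b) : I.Adj a b := by
  have hle := toSubgraph_le_of_isPath hT hI ha hb (Walk.IsPath.of_adj hab)
  exact hle.2 (by simp)

/-- Deleting a leaf does not disconnect: an interior vertex of a path has degree two in it. -/
theorem isImmersion_deleteVerts {V : Type*} [Finite V] {G : SimpleGraph V} {r v : V}
    {I : G.Subgraph} (hI : IsImmersion r I) (hv : IsImmLeaf r I v) :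
    IsImmersion r (I.deleteVerts {v}) := by
  have hr : r ∈ (I.deleteVerts {v}).verts := by simpa using ⟨hI.2, hv.1.symm⟩
  refine ⟨(Subgraph.connected_iff_forall_exists_walk_subgraph _).2 ⟨⟨r, hr⟩, ?_⟩, hr⟩
  intro a b ha hb
  simp only [Subgraph.deleteVerts_verts, Set.mem_sdiff, Set.mem_singleton_iff] at ha hb
  obtain ⟨q, hq, hle⟩ := Connected.exists_isPath_toSubgraph_le hI.1 ha.1 hb.1
  have hvq : v ∉ q.support := by
    intro hmem
    obtain ⟨n, hn, hnl⟩ := Walk.mem_support_iff_exists_getVert.1 hmem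
    have h0 : n ≠ 0 := by
      rintro rfl
      exact ha.2 (by simpa using hn)
    have h1 : n ≠ q.length := by
      rintro rfl
      exact hb.2 (by simpa using hn)
    have h2 := hq.ncard_neighborSet_toSubgraph_internal_eq_two h0 (lt_of_le_of_ne hnl h1)
    rw [hn] at h2
    have h3 : (q.toSubgraph.neighborSet v).ncard ≤ (I.neighborSet v).ncard :=
      Set.ncard_le_ncard (fun x hx => hle.2 hx) (Set.toFinite _)
    have h4 := hv.2
    omega
  refine ⟨q, ?_, ?_⟩
  · intro x hx
    have hx' := (Walk.mem_verts_toSubgraph q).1 hx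
    exact ⟨hle.1 hx, by rintro rfl; exact hvq hx'⟩
  · intro x y hxy
    have hx := (Walk.mem_verts_toSubgraph q).1 (q.toSubgraph.edge_vert hxy)
    have hy := (Walk.mem_verts_toSubgraph q).1 (q.toSubgraph.edge_vert hxy.symm)
    rw [Subgraph.deleteVerts_adj]
    exact ⟨hle.1 (q.toSubgraph.edge_vert hxy), by rintro rfl; exact hvq hx,
      hle.1 (q.toSubgraph.edge_vert hxy.symm), by rintro rfl; exact hvq hy, hle.2 hxy⟩

theorem immCost_deleteVerts_lt {V : Type*} [Finite V] {G : SimpleGraph V} {r v : V}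
    {I : G.Subgraph} (hv : IsImmLeaf r I v) :
    immCost (I.deleteVerts {v}) < immCost I := by
  obtain ⟨u, hu⟩ := Set.ncard_eq_one.1 hv.2
  have hvu : I.Adj v u := by
    have : u ∈ I.neighborSet v := by simp [hu]
    exact this
  have hss : (I.deleteVerts {v}).edgeSet ⊂ I.edgeSet := by
    refine ⟨Subgraph.edgeSet_mono Subgraph.deleteVerts_le, fun h => ?_⟩
    have h1 : s(v, u) ∈ (I.deleteVerts {v}).edgeSet := h hvu
    rw [Subgraph.mem_edgeSet, Subgraph.deleteVerts_adj] at h1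
    exact h1.2.1 rfl
  have := Set.ncard_lt_ncard hss (Set.toFinite _)
  unfold immCost
  omega

/-- The trimming argument: in an optimal covering, a leaf of an immersion lies in no other
immersion of the covering. -/
theorem leaf_unique_of_optimal {V : Type*} [Fintype V] {G : SimpleGraph V} {r v : V} {p : ℕ}
    {S : Finset G.Subgraph} (hS : MinDistOptimal r p S) {I J : G.Subgraph}
    (hI : I ∈ S) (hJ : J ∈ S) (hv : IsImmLeaf r I v) (hvJ : v ∈ J.verts) : I = J := by
  classical
  by_contra hne
  have hlt := immCost_deleteVerts_lt hv
  have hfeas : IsFeasible r p (insert (I.deleteVerts {v}) (S.erase I)) := by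
    refine ⟨?_, ?_⟩
    · intro K hK
      rcases Finset.mem_insert.1 hK with rfl | hK
      · exact ⟨isImmersion_deleteVerts (hS.1.1 I hI).1 hv, hlt.le.trans (hS.1.1 I hI).2⟩
      · exact hS.1.1 K (Finset.mem_of_mem_erase hK)
    · intro x
      by_cases hx : x = v
      · exact ⟨J, by simp [hJ, Ne.symm hne], hx ▸ hvJ⟩
      · obtain ⟨K, hK, hxK⟩ := hS.1.2 x
        by_cases hKI : K = I
        · subst hKI
          exact ⟨K.deleteVerts {v}, by simp, by simpa using ⟨hxK, hx⟩⟩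
        · exact ⟨K, by simp [hK, hKI], hxK⟩
  have hle := hS.2 _ hfeas
  have h1 : totalCost (insert (I.deleteVerts {v}) (S.erase I))
      ≤ immCost (I.deleteVerts {v}) + totalCost (S.erase I) := by
    -- the trimmed immersion may already occur in the covering, whence only an inequality
    unfold totalCost
    by_cases hm : I.deleteVerts {v} ∈ S.erase I
    · rw [Finset.insert_eq_of_mem hm]
      omega
    · rw [Finset.sum_insert hm]
  have h2 : immCost I + totalCost (S.erase I) = totalCost S :=
    Finset.add_sum_erase S immCost hI
  omega

theorem exists_minDistOptimal {V : Type*} [Fintype V] {T : SimpleGraph V} {r : V} {p : ℕ}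
    (hT : T.IsTree) (hp : 2 * treeHeight T r ≤ p) :
    ∃ S : Finset T.Subgraph, MinDistOptimal r p S := by
  classical
  have hne : {S : Finset T.Subgraph | IsFeasible r p S}.Nonempty := by
    choose q hq hlen using fun v => hT.connected.exists_path_of_dist r v
    refine ⟨Finset.univ.image fun v => (q v).toSubgraph, ?_, fun v => ⟨(q v).toSubgraph, ?_, ?_⟩⟩
    · intro I hI
      obtain ⟨v, -, rfl⟩ := Finset.mem_image.1 hI
      refine ⟨⟨(q v).toSubgraph_connected, (q v).start_mem_verts_toSubgraph⟩, ?_⟩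
      have h1 : (q v).toSubgraph.edgeSet.ncard ≤ (q v).length := by
        have : (q v).toSubgraph.edgeSet = ↑(q v).edges.toFinset := by
          ext e
          simp
        rw [this, Set.ncard_coe_finset, ← Walk.length_edges]
        exact List.toFinset_card_le _
      have h2 : T.dist r v ≤ treeHeight T r :=
        Finset.le_sup (f := fun v => T.dist r v) (Finset.mem_univ v)
      have h3 := hlen v
      unfold immCost
      omega
    · exact Finset.mem_image_of_mem _ (Finset.mem_univ v)
    · exact (q v).end_mem_verts_toSubgraph
  obtain ⟨S, hS, hmin⟩ := exists_minimalFor_of_wellFoundedLT _ totalCost hne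
  refine ⟨S, hS, fun J hJ => ?_⟩
  rcases le_total (totalCost S) (totalCost J) with h | h
  · exact h
  · exact hmin hJ h

/-- If `v` is adjacent in the tree to a vertex `w` outside the immersion `I`, where `v ∈ I`, then
the path from `w` to the root passes through `v`, so every immersion containing `w` contains `v`. -/
theorem mem_verts_of_adj {V : Type*} {T : SimpleGraph V} (hT : T.IsTree) {r v w : V}
    {I J : T.Subgraph} (hI : IsImmersion r I) (hJ : IsImmersion r J) (hv : v ∈ I.verts)
    (hw : w ∉ I.verts) (hvw : T.Adj v w) (hwJ : w ∈ J.verts) : v ∈ J.verts := by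
  obtain ⟨q, hq, hle⟩ := Connected.exists_isPath_toSubgraph_le hI.1 hv hI.2
  have hwq : w ∉ q.support := fun h => hw (hle.1 ((Walk.mem_verts_toSubgraph q).2 h))
  have hpath : (Walk.cons hvw.symm q).IsPath := hq.cons hwq
  exact (toSubgraph_le_of_isPath hT hJ.1 hwJ hJ.2 hpath).1
    ((Walk.mem_verts_toSubgraph _).2 (by simp))

theorem isTreeLeaf_of_optimal {V : Type*} [Fintype V] {T : SimpleGraph V} (hT : T.IsTree)
    {r v : V} {p : ℕ} {S : Finset T.Subgraph} (hS : MinDistOptimal r p S) {I : T.Subgraph}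
    (hI : I ∈ S) (hv : IsImmLeaf r I v) : IsTreeLeaf T r v := by
  refine ⟨hv.1, ?_⟩
  suffices h : T.neighborSet v = I.neighborSet v by rw [h, hv.2]
  obtain ⟨u, hu⟩ := Set.ncard_eq_one.1 hv.2
  have hvu : u ∈ I.neighborSet v := by simp [hu]
  have hvI : v ∈ I.verts := I.edge_vert hvu
  have hImm := (hS.1.1 I hI).1
  refine Set.Subset.antisymm (fun w hw => ?_) (I.neighborSet_subset v)
  by_contra hnw
  have hwI : w ∉ I.verts := fun h => hnw (adj_of_mem_verts hT hImm.1 hvI h hw)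
  obtain ⟨J, hJ, hwJ⟩ := hS.1.2 w
  have hvJ := mem_verts_of_adj hT hImm (hS.1.1 J hJ).1 hvI hwI hw hwJ
  exact hwI (leaf_unique_of_optimal hS hI hJ hv hvJ ▸ hwJ)

theorem isImmLeaf_of_isTreeLeaf {V : Type*} [Finite V] {G : SimpleGraph V} {r l : V}
    {I : G.Subgraph} (hI : IsImmersion r I) (hl : IsTreeLeaf G r l) (hlI : l ∈ I.verts) :
    IsImmLeaf r I l := by
  refine ⟨hl.1, le_antisymm ?_ ?_⟩
  · rw [← hl.2]
    exact Set.ncard_le_ncard (I.neighborSet_subset l) (Set.toFinite _)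
  · obtain ⟨q, -, hle⟩ := Connected.exists_isPath_toSubgraph_le hI.1 hlI hI.2
    refine (Set.ncard_pos (Set.toFinite _)).2 ?_
    cases q with
    | nil => exact absurd rfl hl.1
    | @cons _ w _ h q' => exact ⟨w, hle.2 (by simp : (Walk.cons h q').toSubgraph.Adj l w)⟩

theorem stmt_6 {V : Type*} [Fintype V] (T : SimpleGraph V) (r : V) (p : ℕ)
    (hT : T.IsTree) (hE : T.edgeSet.Nonempty) (hp : 2 * treeHeight T r ≤ p) :
    ∃ 𝓘 : Finset T.Subgraph, MinDistOptimal r p 𝓘 ∧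
      (∀ I ∈ 𝓘, ∀ v : V, IsImmLeaf r I v → IsTreeLeaf T r v) ∧
      (∀ l : V, IsTreeLeaf T r l → ∃! I : T.Subgraph, I ∈ 𝓘 ∧ IsImmLeaf r I l) := by
  obtain ⟨S, hS⟩ := exists_minDistOptimal hT hp
  refine ⟨S, hS, fun I hI v hv => isTreeLeaf_of_optimal hT hS hI hv, fun l hl => ?_⟩
  obtain ⟨I, hI, hlI⟩ := hS.1.2 l
  have hleaf := isImmLeaf_of_isTreeLeaf (hS.1.1 I hI).1 hl hlI
  refine ⟨I, ⟨hI, hleaf⟩, ?_⟩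
  rintro J ⟨hJ, hJl⟩
  exact leaf_unique_of_optimal hS hJ hI hJl hlI
end
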